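/- arXiv:1502.02799 — 6 statements merged into one kernel-verified Lean document; each statement's English description precedes it below -/
import Mathlib

section
/- Let c1 and c2 be two resolvable clauses and let Q, H ⊆ 𝒜 be disjoint sets of atoms with Var(c1 ∪ c2) ⊆ Q ∪ H. If Q and H satisfy the QH-conditions for both c1 and c2, then Q and H satisfy the QH-conditions for res(c1,c2). -/
variable {α : Type*} [Fintype α] [DecidableEq α]

/-- A clause (or term): a finite set of literals, where a literal is an atom
paired with a polarity (`true` = positive occurrence, `false` = negated). -/
abbrev Clause (α : Type*) := Finset (α × Bool)

/-- A finite set of literals is a legal clause/term if it contains no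
complementary pair of literals. -/
def IsClause (c : Clause α) : Prop := ∀ p : α, ¬((p, true) ∈ c ∧ (p, false) ∈ c)

instance : DecidablePred (IsClause (α := α)) := fun c =>
  decidable_of_iff (∀ p : α, ¬((p, true) ∈ c ∧ (p, false) ∈ c)) Iff.rfl

/-- The atoms occurring in a clause/term. -/
def varsC (c : Clause α) : Finset α := c.image Prod.fst

/-- The atoms occurring positively in a clause/term. -/
def posC (c : Clause α) : Finset α := (c.filter fun l => l.2 = true).image Prod.fst

/-- The atoms occurring negatively in a clause/term. -/
def negC (c : Clause α) : Finset α := (c.filter fun l => l.2 = false).image Prod.fst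

/-- The resolvent of two clauses on atom `p`. -/
def res (c c' : Clause α) (p : α) : Clause α :=
  (c ∪ c') \ ({(p, true), (p, false)} : Finset (α × Bool))

/-- `c` and `c'` are resolvable on atom `p`: `p` occurs in one of them and `¬p` in
the other, and the resolvent contains no complementary pair of literals. -/
def ResolvableOn (c c' : Clause α) (p : α) : Prop :=
  ((p, true) ∈ c ∧ (p, false) ∈ c' ∨ (p, false) ∈ c ∧ (p, true) ∈ c') ∧ IsClause (res c c' p)

/-- Renaming of a literal: flip the polarity of atoms in `V`. -/
def renLit (V : Finset α) (l : α × Bool) : α × Bool := if l.1 ∈ V then (l.1, !l.2) else l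

/-- Renaming of a clause w.r.t. the atoms in `V`. -/
def renClause (V : Finset α) (c : Clause α) : Clause α := c.image (renLit V)

/-- Renaming of a CNF theory w.r.t. the atoms in `V`. -/
def renTheory (V : Finset α) (T : Finset (Clause α)) : Finset (Clause α) := T.image (renClause V)

/-- A Horn clause: at most one positive literal. -/
def HornClause (c : Clause α) : Prop := (posC c).card ≤ 1

/-- A Horn theory: a finite set of Horn clauses. -/
def IsHornTheory (T : Finset (Clause α)) : Prop := ∀ c ∈ T, HornClause c

/-- A Krom theory: each clause contains at most 2 literals. -/
def IsKromTheory (T : Finset (Clause α)) : Prop := ∀ c ∈ T, c.card ≤ 2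

/-- `T` is Horn renamable: some renaming of `T` is a Horn theory. -/
def IsRenHorn (T : Finset (Clause α)) : Prop := ∃ V : Finset α, IsHornTheory (renTheory V T)

/-- The QH-conditions for sets of atoms `Q`, `H` and a clause `c`. -/
def QHcond (Q H : Finset α) (c : Clause α) : Prop :=
  (varsC c ∩ Q).card ≤ 2 ∧ (posC c ∩ H).card ≤ 1 ∧
    ((posC c ∩ H).card = 1 → varsC c ∩ Q = ∅)

/-- The atoms occurring in a CNF theory. -/
def varsT (T : Finset (Clause α)) : Finset α := T.sup varsC

/-- `T` has a QH-partition: a partition `{Q, H}` of its atoms satisfying the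
QH-conditions for each of its clauses. -/
def HasQHPartition (T : Finset (Clause α)) : Prop :=
  ∃ Q H : Finset α, Q ∩ H = ∅ ∧ Q ∪ H = varsT T ∧ ∀ c ∈ T, QHcond Q H c

/-- `T` is q-Horn: some renaming of `T` has a QH-partition. -/
def IsQHorn (T : Finset (Clause α)) : Prop := ∃ V : Finset α, HasQHPartition (renTheory V T)

/-- Satisfaction of a literal by an interpretation (a set of atoms). -/
def litSat (I : Set α) (l : α × Bool) : Prop := if l.2 then l.1 ∈ I else l.1 ∉ I

/-- Satisfaction of a clause (read disjunctively). -/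
def clauseSat (I : Set α) (c : Clause α) : Prop := ∃ l ∈ c, litSat I l

/-- Satisfaction of a term (read conjunctively). -/
def termSat (I : Set α) (t : Clause α) : Prop := ∀ l ∈ t, litSat I l

/-- Satisfaction of a CNF theory. -/
def cnfSat (I : Set α) (T : Finset (Clause α)) : Prop := ∀ c ∈ T, clauseSat I c

/-- One step of the resolution closure. -/
def resStep (S : Set (Clause α)) : Set (Clause α) :=
  S ∪ {d | ∃ c ∈ S, ∃ c' ∈ S, ∃ p : α, ResolvableOn c c' p ∧ d = res c c' p}

/-- The iterated resolution closure `res^n_T`. -/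
def resIter (T : Finset (Clause α)) : ℕ → Set (Clause α)
  | 0 => (↑T : Set (Clause α))
  | n + 1 => resStep (resIter T n)

/-- Propositional formulas over atoms `α`. -/
inductive PropForm (α : Type*) where
  | var : α → PropForm α
  | tru : PropForm α
  | fls : PropForm α
  | neg : PropForm α → PropForm α
  | conj : PropForm α → PropForm α → PropForm α
  | disj : PropForm α → PropForm α → PropForm α

namespace PropForm

/-- Satisfaction of a formula by an interpretation. -/
def Sat (I : Set α) : PropForm α → Prop
  | var p => p ∈ I
  | tru => True
  | fls => False
  | neg φ => ¬ Sat I φ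
  | conj φ ψ => Sat I φ ∧ Sat I ψ
  | disj φ ψ => Sat I φ ∨ Sat I ψ

/-- Logical equivalence: same models. -/
def equivalent (φ ψ : PropForm α) : Prop := ∀ I : Set α, Sat I φ ↔ Sat I ψ

/-- Entailment: every model of `φ` is a model of `ψ`. -/
def entails (φ ψ : PropForm α) : Prop := ∀ I : Set α, Sat I φ → Sat I ψ

/-- The atoms occurring in a formula. -/
def vars : PropForm α → Finset α
  | var p => {p}
  | tru => ∅
  | fls => ∅
  | neg φ => vars φ
  | conj φ ψ => vars φ ∪ vars ψ
  | disj φ ψ => vars φ ∪ vars ψ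

/-- Substitution of the formula `χ` for the atom `p`. -/
def subst (p : α) (χ : PropForm α) : PropForm α → PropForm α
  | var q => if q = p then χ else var q
  | tru => tru
  | fls => fls
  | neg φ => neg (subst p χ φ)
  | conj φ ψ => conj (subst p χ φ) (subst p χ ψ)
  | disj φ ψ => disj (subst p χ φ) (subst p χ ψ)

/-- Forgetting a single atom: `Forget(φ, {p}) = φ[p/⊤] ∨ φ[p/⊥]`. -/
def forget1 (φ : PropForm α) (p : α) : PropForm α := disj (subst p tru φ) (subst p fls φ)

/-- Forgetting a set of atoms (presented as a list), one atom at a time: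
`Forget(φ, ∅) = φ` and `Forget(φ, V ∪ {p}) = Forget(Forget(φ, {p}), V)`. -/
def Forget : PropForm α → List α → PropForm α
  | φ, [] => φ
  | φ, p :: V => Forget (forget1 φ p) V

/-- Renaming of a formula: replace each occurrence of an atom `p ∈ V` by `¬p`. -/
def renForm (V : Finset α) : PropForm α → PropForm α
  | var p => if p ∈ V then neg (var p) else var p
  | tru => tru
  | fls => fls
  | neg φ => neg (renForm V φ)
  | conj φ ψ => conj (renForm V φ) (renForm V ψ)
  | disj φ ψ => disj (renForm V φ) (renForm V ψ)

/-- `φ` is irrelevant to the atoms in `V`: it is equivalent to a formula not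
mentioning any atom of `V`. -/
def IR (φ : PropForm α) (V : List α) : Prop :=
  ∃ φ' : PropForm α, equivalent φ φ' ∧ ∀ p ∈ V, p ∉ vars φ'

end PropForm

/-- The formula corresponding to a literal. -/
def litToForm (l : α × Bool) : PropForm α :=
  if l.2 then PropForm.var l.1 else PropForm.neg (PropForm.var l.1)

/-- The disjunction of the literals of a clause. -/
noncomputable def clauseToForm (c : Clause α) : PropForm α :=
  c.toList.foldr (fun l φ => PropForm.disj (litToForm l) φ) PropForm.fls

/-- The conjunction of the clauses of a CNF theory. -/
noncomputable def cnfToForm (T : Finset (Clause α)) : PropForm α :=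
  T.toList.foldr (fun c φ => PropForm.conj (clauseToForm c) φ) PropForm.tru

/-- `φ` is Horn expressible. -/
def HornExpressible (φ : PropForm α) : Prop :=
  ∃ T : Finset (Clause α), (∀ c ∈ T, IsClause c) ∧ IsHornTheory T ∧
    PropForm.equivalent φ (cnfToForm T)

/-- `φ` is Krom expressible. -/
def KromExpressible (φ : PropForm α) : Prop :=
  ∃ T : Finset (Clause α), (∀ c ∈ T, IsClause c) ∧ IsKromTheory T ∧
    PropForm.equivalent φ (cnfToForm T)

/-- `φ` is renamable-Horn expressible. -/
def RenHornExpressible (φ : PropForm α) : Prop :=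
  ∃ T : Finset (Clause α), (∀ c ∈ T, IsClause c) ∧ IsRenHorn T ∧
    PropForm.equivalent φ (cnfToForm T)

/-- `φ` is q-Horn expressible. -/
def QHornExpressible (φ : PropForm α) : Prop :=
  ∃ T : Finset (Clause α), (∀ c ∈ T, IsClause c) ∧ IsQHorn T ∧
    PropForm.equivalent φ (cnfToForm T)

/-- A formula entails a clause. -/
def EntailsClause (φ : PropForm α) (c : Clause α) : Prop :=
  ∀ I : Set α, PropForm.Sat I φ → clauseSat I c

/-- A prime implicate of a formula. -/
def IsPrimeImplicate (φ : PropForm α) (c : Clause α) : Prop :=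
  IsClause c ∧ EntailsClause φ c ∧ ∀ c' ⊂ c, ¬ EntailsClause φ c'

/-- A term entails a formula. -/
def TermEntails (t : Clause α) (φ : PropForm α) : Prop :=
  ∀ I : Set α, termSat I t → PropForm.Sat I φ

/-- A prime implicant of a formula. -/
def IsPrimeImplicant (φ : PropForm α) (t : Clause α) : Prop :=
  IsClause t ∧ TermEntails t φ ∧ ∀ t' ⊂ t, ¬ TermEntails t' φ

/-- A CNF theory entails a clause. -/
def TheoryEntailsClause (T : Finset (Clause α)) (c : Clause α) : Prop :=
  ∀ I : Set α, cnfSat I T → clauseSat I c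

/-- A prime implicate of a CNF theory. -/
def IsPrimeImplicateT (T : Finset (Clause α)) (c : Clause α) : Prop :=
  IsClause c ∧ TheoryEntailsClause T c ∧ ∀ c' ⊂ c, ¬ TheoryEntailsClause T c'

/-- The set of prime implicates of a CNF theory, as a finite theory. -/
noncomputable def PI (T : Finset (Clause α)) : Finset (Clause α) :=
  (Set.toFinite {c : Clause α | IsPrimeImplicateT T c}).toFinset

/-- Strong unfolding of a CNF theory w.r.t. an atom `p`: keep the clauses not
mentioning `p`, and replace the clauses containing the positive literal `p` by all
their resolvents with clauses containing `¬p`; clauses containing `¬p` are removed. -/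
def unfold1 (T : Finset (Clause α)) (p : α) : Finset (Clause α) :=
  T.filter (fun c => (p, true) ∉ c ∧ (p, false) ∉ c) ∪
    ((T ×ˢ T).filter fun cc =>
        (p, true) ∈ cc.1 ∧ (p, false) ∈ cc.2 ∧ IsClause (res cc.1 cc.2 p)).image
      fun cc => res cc.1 cc.2 p

/-- Iterated strong unfolding w.r.t. a set of atoms (presented as a list):
`unfold(T, ∅) = T` and `unfold(T, V ∪ {p}) = unfold(unfold(T, p), V)`. -/
def unfoldList (T : Finset (Clause α)) : List α → Finset (Clause α)
  | [] => T
  | p :: V => unfoldList (unfold1 T p) V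

theorem mem_varsC_iff' (c : Clause α) (a : α) :
    a ∈ varsC c ↔ (a, true) ∈ c ∨ (a, false) ∈ c := by
  simp [varsC, or_comm]

theorem mem_posC_iff' (c : Clause α) (a : α) : a ∈ posC c ↔ (a, true) ∈ c := by
  simp [posC]

theorem mem_res_iff' (c d : Clause α) (p a : α) (b : Bool) :
    (a, b) ∈ res c d p ↔ ((a, b) ∈ c ∨ (a, b) ∈ d) ∧ a ≠ p := by
  cases b <;> simp [res]

theorem qh_aux (c1 c2 : Clause α) (Q H : Finset α) (p : α)
    (hp1 : (p, true) ∈ c1) (hp2 : (p, false) ∈ c2)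
    (hdisj : Q ∩ H = ∅) (hp : p ∈ Q ∨ p ∈ H)
    (hq1 : QHcond Q H c1) (hq2 : QHcond Q H c2) :
    QHcond Q H (res c1 c2 p) := by
  obtain ⟨a1, b1, d1⟩ := hq1
  obtain ⟨a2, b2, d2⟩ := hq2
  rcases hp with hp | hp
  · have m1 : p ∈ varsC c1 ∩ Q := by simp [mem_varsC_iff', hp1, hp]
    have m2 : p ∈ varsC c2 ∩ Q := by simp [mem_varsC_iff', hp2, hp]
    have e1 : (posC c1 ∩ H).card = 0 := by
      by_contra h
      rw [d1 (by omega)] at m1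
      simp at m1
    have e2 : (posC c2 ∩ H).card = 0 := by
      by_contra h
      rw [d2 (by omega)] at m2
      simp at m2
    have e3 : posC (res c1 c2 p) ∩ H = ∅ := by
      rw [Finset.card_eq_zero] at e1 e2
      ext x
      have t1 := Finset.ext_iff.1 e1 x
      have t2 := Finset.ext_iff.1 e2 x
      simp only [Finset.mem_inter, mem_posC_iff', mem_res_iff', Finset.notMem_empty] at *
      tauto
    have hsub : varsC (res c1 c2 p) ∩ Q ⊆
        (varsC c1 ∩ Q).erase p ∪ (varsC c2 ∩ Q).erase p := by
      intro x
      simp only [Finset.mem_inter, Finset.mem_union, Finset.mem_erase, mem_varsC_iff',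
        mem_res_iff']
      tauto
    have k := (Finset.card_le_card hsub).trans (Finset.card_union_le _ _)
    rw [Finset.card_erase_of_mem m1, Finset.card_erase_of_mem m2] at k
    refine ⟨by omega, by simp [e3], by simp [e3]⟩
  · have m1 : p ∈ posC c1 ∩ H := by simp [mem_posC_iff', hp1, hp]
    have e1 : (posC c1 ∩ H).card = 1 := by
      have := Finset.card_pos.2 ⟨p, m1⟩
      omega
    have v1 := d1 e1
    have hpos : posC (res c1 c2 p) ∩ H ⊆ posC c2 ∩ H := by
      intro x hx
      have u : x ∈ posC c1 ∩ H → x = p := fun h => Finset.card_le_one.1 b1 x h p m1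
      simp only [Finset.mem_inter, mem_posC_iff', mem_res_iff'] at *
      tauto
    have hvar : varsC (res c1 c2 p) ∩ Q ⊆ varsC c2 ∩ Q := by
      intro x hx
      have t1 := Finset.ext_iff.1 v1 x
      simp only [Finset.mem_inter, mem_varsC_iff', mem_res_iff', Finset.notMem_empty] at *
      tauto
    refine ⟨(Finset.card_le_card hvar).trans a2, (Finset.card_le_card hpos).trans b2, ?_⟩
    intro h
    have := Finset.card_le_card hpos
    rw [d2 (by omega)] at hvar
    exact Finset.subset_empty.1 hvar

/-- If disjoint sets `Q`, `H` of atoms covering the variables of two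
resolvable clauses `c1`, `c2` satisfy the QH-conditions for both `c1` and `c2`,
then they satisfy the QH-conditions for `res(c1,c2)`. -/
theorem qh_conditions_preserved_by_resolution
    (c1 c2 : Clause α) (Q H : Finset α) (p : α)
    (h1 : IsClause c1) (h2 : IsClause c2) (hres : ResolvableOn c1 c2 p)
    (hdisj : Q ∩ H = ∅) (hcover : varsC (c1 ∪ c2) ⊆ Q ∪ H)
    (hq1 : QHcond Q H c1) (hq2 : QHcond Q H c2) :
    QHcond Q H (res c1 c2 p) := by
  have hp : p ∈ Q ∨ p ∈ H := by
    rw [← Finset.mem_union]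
    apply hcover
    rw [mem_varsC_iff']
    simp only [Finset.mem_union]
    have := hres.1
    tauto
  rcases hres.1 with ⟨ha, hb⟩ | ⟨ha, hb⟩
  · exact qh_aux c1 c2 Q H p ha hb hdisj hp hq1 hq2
  · have e : res c1 c2 p = res c2 c1 p := by simp [res, Finset.union_comm]
    rw [e]
    exact qh_aux c2 c1 Q H p hb ha hdisj hp hq2 hq1
end

section
/- Let V ⊆ 𝒜 and Σ be a CNF theory. If ren(Σ,V) is a Horn theory, then ren(res^n_Σ, V) is a Horn theory for every n ≥ 0. -/
variable {α : Type*} [Fintype α] [DecidableEq α]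

/-- Characterization of the Horn property of a renamed clause. -/
theorem horn_ren_iff_aux (V : Finset α) (c : Clause α) :
    HornClause (renClause V c) ↔
      ∀ a b : α, (a, decide (a ∉ V)) ∈ c → (b, decide (b ∉ V)) ∈ c → a = b := by
  have key : ∀ q : α, q ∈ posC (renClause V c) ↔ (q, decide (q ∉ V)) ∈ c := by
    intro q
    simp only [posC, renClause, Finset.mem_image, Finset.mem_filter]
    constructor
    · rintro ⟨l, ⟨⟨⟨a, b⟩, hm, rfl⟩, hl⟩, rfl⟩
      by_cases ha : a ∈ V <;> simp_all [renLit]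
    · intro h
      refine ⟨(q, true), ⟨⟨_, h, ?_⟩, rfl⟩, rfl⟩
      by_cases hq : q ∈ V <;> simp [renLit, hq]
  unfold HornClause
  rw [Finset.card_le_one]
  simp only [key]
  exact ⟨fun h a b ha hb => h a ha b hb, fun h a ha b hb => h a b ha hb⟩

/-- If `ren(Σ,V)` is a Horn theory, then `ren(res^n_Σ, V)` is a Horn
theory for every `n ≥ 0`. -/
theorem renamed_resolution_closure_horn
    (S : Finset (Clause α)) (V : Finset α)
    (hS : ∀ c ∈ S, IsClause c)
    (hHorn : IsHornTheory (renTheory V S)) :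
    ∀ n : ℕ, ∀ c ∈ resIter S n, HornClause (renClause V c) := by
  intro n
  induction n with
  | zero =>
    intro c hc
    exact hHorn _ (Finset.mem_image_of_mem _ hc)
  | succ n ih =>
    intro d hd
    rcases hd with hd | ⟨c, hc, c', hc', p, ⟨hp, -⟩, rfl⟩
    · exact ih d hd
    · have h1 := (horn_ren_iff_aux V c).1 (ih c hc)
      have h2 := (horn_ren_iff_aux V c').1 (ih c' hc')
      rw [horn_ren_iff_aux]
      have hpp : (p, decide (p ∉ V)) ∈ c ∨ (p, decide (p ∉ V)) ∈ c' := by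
        by_cases hV : p ∈ V <;> simp only [hV] <;> simp <;> tauto
      have hmem : ∀ a : α, (a, decide (a ∉ V)) ∈ res c c' p →
          a ≠ p ∧ ((a, decide (a ∉ V)) ∈ c ∨ (a, decide (a ∉ V)) ∈ c') := by
        intro a ha
        simp only [res, Finset.mem_sdiff, Finset.mem_union, Finset.mem_insert,
          Finset.mem_singleton] at ha
        refine ⟨?_, ha.1⟩
        rintro rfl
        apply ha.2
        by_cases hV : a ∈ V <;> simp [hV]
      intro a b ha hb
      obtain ⟨ha0, ha1⟩ := hmem a ha
      obtain ⟨hb0, hb1⟩ := hmem b hb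
      rcases hpp with hpp | hpp
      · exact h2 a b (ha1.resolve_left fun h => ha0 (h1 _ _ h hpp))
          (hb1.resolve_left fun h => hb0 (h1 _ _ h hpp))
      · exact h1 a b (ha1.resolve_right fun h => ha0 (h2 _ _ h hpp))
          (hb1.resolve_right fun h => hb0 (h2 _ _ h hpp))
end

section
/- Let Σ be a CNF theory. If Σ is a Horn theory (respectively: a Horn renamable theory, a q-Horn theory), then the set PI(Σ) of prime implicates of Σ is a Horn theory (respectively: a Horn renamable theory, a q-Horn theory). -/
variable {α : Type*} [Fintype α] [DecidableEq α]

theorem mem_renClause (V : Finset α) (c : Clause α) (p : α) (b : Bool) :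
    (p, b) ∈ renClause V c ↔ (p, if p ∈ V then !b else b) ∈ c := by
  unfold renClause renLit
  simp only [Finset.mem_image, Prod.exists]
  constructor
  · rintro ⟨q, b', h, e⟩
    by_cases hq : q ∈ V
    · simp only [hq, if_true, Prod.mk.injEq] at e
      obtain ⟨rfl, rfl⟩ := e
      simpa [hq] using h
    · simp only [hq, if_false, Prod.mk.injEq] at e
      obtain ⟨rfl, rfl⟩ := e
      simpa [hq] using h
  · intro h
    refine ⟨p, _, h, ?_⟩
    by_cases hp : p ∈ V <;> simp [hp]

theorem mem_varsC (c : Clause α) (p : α) : p ∈ varsC c ↔ ∃ b, (p, b) ∈ c := by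
  simp [varsC]

theorem mem_posC (c : Clause α) (p : α) : p ∈ posC c ↔ (p, true) ∈ c := by
  simp [posC]

theorem mem_res (c c' : Clause α) (p q : α) (b : Bool) :
    (q, b) ∈ res c c' p ↔ ((q, b) ∈ c ∨ (q, b) ∈ c') ∧ q ≠ p := by
  cases b <;> simp [res]

theorem isClause_ren (V : Finset α) {c : Clause α} (h : IsClause c) :
    IsClause (renClause V c) := by
  intro p hp
  rw [mem_renClause, mem_renClause] at hp
  have := h p
  by_cases hV : p ∈ V
  · simp only [hV, if_true, Bool.not_true, Bool.not_false] at hp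
    exact this hp.symm
  · simp only [hV, if_false] at hp
    exact this hp

theorem ren_res (V : Finset α) (c c' : Clause α) (p : α) :
    renClause V (res c c' p) = res (renClause V c) (renClause V c') p := by
  ext ⟨q, b⟩
  simp only [mem_renClause, mem_res]

theorem res_comm' (c c' : Clause α) (p : α) : res c c' p = res c' c p := by
  simp [res, Finset.union_comm]

theorem qh_mono {Q H : Finset α} {c d : Clause α}
    (h1 : varsC d ∩ Q ⊆ varsC c ∩ Q) (h2 : posC d ∩ H ⊆ posC c ∩ H)
    (h : QHcond Q H c) : QHcond Q H d := by
  obtain ⟨a1, a2, a3⟩ := h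
  have k1 := Finset.card_le_card h1
  have k2 := Finset.card_le_card h2
  refine ⟨by omega, by omega, fun e => ?_⟩
  rw [a3 (by omega)] at h1
  exact Finset.subset_empty.1 h1

theorem qh_res {Q H : Finset α} {c c' : Clause α} {p : α} (hc' : IsClause c')
    (hp : (p, true) ∈ c) (hp' : (p, false) ∈ c') (h : QHcond Q H c) (h' : QHcond Q H c')
    (hpQH : p ∈ Q ∪ H) : QHcond Q H (res c c' p) := by
  rcases Finset.mem_union.1 hpQH with hQ | hH
  · have e : posC c ∩ H = ∅ := by
      by_contra hne
      have : 0 < (posC c ∩ H).card := Finset.card_pos.2 (Finset.nonempty_iff_ne_empty.2 hne)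
      have h3 := h.2.2 (by have := h.2.1; omega)
      have : p ∈ varsC c ∩ Q := Finset.mem_inter.2 ⟨(mem_varsC _ _).2 ⟨_, hp⟩, hQ⟩
      simp [h3] at this
    have e' : posC c' ∩ H = ∅ := by
      by_contra hne
      have : 0 < (posC c' ∩ H).card := Finset.card_pos.2 (Finset.nonempty_iff_ne_empty.2 hne)
      have h3 := h'.2.2 (by have := h'.2.1; omega)
      have : p ∈ varsC c' ∩ Q := Finset.mem_inter.2 ⟨(mem_varsC _ _).2 ⟨_, hp'⟩, hQ⟩
      simp [h3] at this
    have e2 : posC (res c c' p) ∩ H = ∅ := by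
      apply Finset.eq_empty_of_forall_notMem
      intro q hq
      rw [Finset.mem_inter, mem_posC, mem_res] at hq
      rcases hq with ⟨⟨h1 | h1, -⟩, h2⟩
      · have : q ∈ posC c ∩ H := Finset.mem_inter.2 ⟨(mem_posC _ _).2 h1, h2⟩
        simp [e] at this
      · have : q ∈ posC c' ∩ H := Finset.mem_inter.2 ⟨(mem_posC _ _).2 h1, h2⟩
        simp [e'] at this
    refine ⟨?_, by simp [e2], by simp [e2]⟩
    have hsub : varsC (res c c' p) ∩ Q ⊆
        (varsC c ∩ Q).erase p ∪ (varsC c' ∩ Q).erase p := by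
      intro q hq
      simp only [Finset.mem_inter, mem_varsC, mem_res, Finset.mem_union, Finset.mem_erase] at hq ⊢
      obtain ⟨⟨b, h1 | h1, h2⟩, h3⟩ := hq
      · exact Or.inl ⟨h2, ⟨b, h1⟩, h3⟩
      · exact Or.inr ⟨h2, ⟨b, h1⟩, h3⟩
    have k := Finset.card_le_card hsub
    have k2 := Finset.card_union_le ((varsC c ∩ Q).erase p) ((varsC c' ∩ Q).erase p)
    rw [Finset.card_erase_of_mem (Finset.mem_inter.2 ⟨(mem_varsC _ _).2 ⟨_, hp⟩, hQ⟩),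
      Finset.card_erase_of_mem (Finset.mem_inter.2 ⟨(mem_varsC _ _).2 ⟨_, hp'⟩, hQ⟩)] at k2
    have := h.1
    have := h'.1
    omega
  · have hm : p ∈ posC c ∩ H := Finset.mem_inter.2 ⟨(mem_posC _ _).2 hp, hH⟩
    have hcard : (posC c ∩ H).card = 1 := by
      have := Finset.card_pos.2 ⟨p, hm⟩
      have := h.2.1
      omega
    have hv := h.2.2 hcard
    refine qh_mono ?_ ?_ h'
    · intro q hq
      simp only [Finset.mem_inter, mem_varsC, mem_res] at hq ⊢
      obtain ⟨⟨b, h1 | h1, h2⟩, h3⟩ := hq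
      · have : q ∈ varsC c ∩ Q := Finset.mem_inter.2 ⟨(mem_varsC _ _).2 ⟨_, h1⟩, h3⟩
        simp [hv] at this
      · exact ⟨⟨b, h1⟩, h3⟩
    · intro q hq
      simp only [Finset.mem_inter, mem_posC, mem_res] at hq ⊢
      obtain ⟨⟨h1 | h1, h2⟩, h3⟩ := hq
      · exact absurd (Finset.card_le_one.1 h.2.1 q
          (Finset.mem_inter.2 ⟨(mem_posC _ _).2 h1, h3⟩) p hm) h2
      · exact ⟨h1, h3⟩

/-- The invariant carried through resolution. -/
def QHInv (V Q H : Finset α) (c : Clause α) : Prop :=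
  varsC (renClause V c) ⊆ Q ∪ H ∧ QHcond Q H (renClause V c)

theorem inv_res {V Q H : Finset α} {c c' : Clause α} {p : α} (hc : IsClause c)
    (hc' : IsClause c') (hp : (p, true) ∈ c) (hp' : (p, false) ∈ c')
    (h : QHInv V Q H c) (h' : QHInv V Q H c') : QHInv V Q H (res c c' p) := by
  constructor
  · intro q hq
    rw [ren_res, mem_varsC] at hq
    obtain ⟨b, hq⟩ := hq
    rcases (mem_res _ _ _ _ _).1 hq with ⟨h1 | h1, -⟩
    · exact h.1 ((mem_varsC _ _).2 ⟨_, h1⟩)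
    · exact h'.1 ((mem_varsC _ _).2 ⟨_, h1⟩)
  · rw [ren_res]
    by_cases hV : p ∈ V
    · have h1 : (p, false) ∈ renClause V c := by rw [mem_renClause]; simpa [hV] using hp
      have h2 : (p, true) ∈ renClause V c' := by rw [mem_renClause]; simpa [hV] using hp'
      rw [res_comm']
      exact qh_res (isClause_ren V hc) h2 h1 h'.2 h.2 (h.1 ((mem_varsC _ _).2 ⟨_, h1⟩))
    · have h1 : (p, true) ∈ renClause V c := by rw [mem_renClause]; simpa [hV] using hp
      have h2 : (p, false) ∈ renClause V c' := by rw [mem_renClause]; simpa [hV] using hp'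
      exact qh_res (isClause_ren V hc') h1 h2 h.2 h'.2 (h.1 ((mem_varsC _ _).2 ⟨_, h1⟩))

theorem clauseSat_mono {I : Set α} {c d : Clause α} (h : c ⊆ d) (hc : clauseSat I c) :
    clauseSat I d := by
  obtain ⟨l, hl, hs⟩ := hc
  exact ⟨l, h hl, hs⟩

theorem clauseSat_res {I : Set α} {c c' : Clause α} {p : α} (hc : IsClause c)
    (hc' : IsClause c') (hp : (p, true) ∈ c) (hp' : (p, false) ∈ c')
    (h : clauseSat I c) (h' : clauseSat I c') : clauseSat I (res c c' p) := by
  obtain ⟨⟨q, b⟩, hl, hs⟩ := h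
  obtain ⟨⟨q', b'⟩, hl', hs'⟩ := h'
  by_cases hq : q = p
  · subst hq
    by_cases hq' : q' = q
    · subst hq'
      exfalso
      cases b
      · exact hc _ ⟨hp, hl⟩
      · cases b'
        · simp [litSat] at hs hs'
          exact hs' hs
        · exact hc' _ ⟨hl', hp'⟩
    · exact ⟨_, (mem_res _ _ _ _ _).2 ⟨Or.inr hl', hq'⟩, hs'⟩
  · exact ⟨_, (mem_res _ _ _ _ _).2 ⟨Or.inl hl, hq⟩, hs⟩

theorem isClause_insert {c : Clause α} (hc : IsClause c) {p : α} (hp : p ∉ varsC c) (b : Bool) :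
    IsClause (insert (p, b) c) := by
  intro q hq
  simp only [Finset.mem_insert, Prod.mk.injEq] at hq
  have hn : ∀ b, (p, b) ∉ c := fun b h => hp ((mem_varsC _ _).2 ⟨b, h⟩)
  obtain ⟨h1 | h1, h2 | h2⟩ := hq
  · have := h1.2.trans h2.2.symm
    simp at this
  · exact hn _ (h1.1 ▸ h2)
  · exact hn _ (h2.1 ▸ h1)
  · exact hc q ⟨h1, h2⟩

theorem isClause_mono {c d : Clause α} (h : d ⊆ c) (hc : IsClause c) : IsClause d :=
  fun p hp => hc p ⟨h hp.1, h hp.2⟩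

/-- Completeness of resolution for implicates, relative to a resolution-closed property. -/
theorem completeness (S : Finset (Clause α)) (hS : ∀ c ∈ S, IsClause c) (P : Clause α → Prop)
    (hP : ∀ c ∈ S, P c)
    (hres : ∀ c c' : Clause α, ∀ p, IsClause c → IsClause c' → (p, true) ∈ c → (p, false) ∈ c' →
      P c → P c' → P (res c c' p)) :
    ∀ (n : ℕ) (c : Clause α), (varsC c)ᶜ.card = n → IsClause c → TheoryEntailsClause S c →
      ∃ d ⊆ c, P d ∧ TheoryEntailsClause S d := by
  intro n
  induction n with
  | zero =>
    intro c hn hc hSc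
    have hall : ∀ p, p ∈ varsC c := by
      intro p
      by_contra hp
      have := Finset.card_eq_zero.1 hn
      have h2 : p ∈ (varsC c)ᶜ := Finset.mem_compl.2 hp
      simp [this] at h2
    let I : Set α := {p | (p, false) ∈ c}
    have hI : ¬ clauseSat I c := by
      rintro ⟨⟨q, b⟩, hl, hs⟩
      cases b
      · simp [litSat, I] at hs
        exact hs hl
      · simp [litSat, I] at hs
        exact hc q ⟨hl, hs⟩
    have hnS : ¬ cnfSat I S := fun h => hI (hSc I h)
    unfold cnfSat at hnS
    push Not at hnS
    obtain ⟨s, hs, hns⟩ := hnS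
    refine ⟨s, ?_, hP s hs, fun J hJ => hJ s hs⟩
    rintro ⟨q, b⟩ hq
    have hnl : ¬ litSat I (q, b) := fun h => hns ⟨_, hq, h⟩
    obtain ⟨b', hb'⟩ := (mem_varsC _ _).1 (hall q)
    cases b
    · simpa [litSat, I] using hnl
    · simp [litSat, I] at hnl
      cases b'
      · exact absurd hb' hnl
      · exact hb'
  | succ n ih =>
    intro c hn hc hSc
    obtain ⟨p, hp⟩ : ((varsC c)ᶜ).Nonempty := Finset.card_pos.1 (by omega)
    have hpc := Finset.mem_compl.1 hp
    have key : ∀ b, ∃ d ⊆ insert (p, b) c, P d ∧ TheoryEntailsClause S d := by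
      intro b
      apply ih _ _ (isClause_insert hc hpc b)
      · intro I hI
        exact clauseSat_mono (Finset.subset_insert _ _) (hSc I hI)
      · have : (varsC (insert (p, b) c))ᶜ = (varsC c)ᶜ.erase p := by
          ext q
          simp [varsC, Finset.image_insert]
        rw [this, Finset.card_erase_of_mem hp, hn]
        rfl
    obtain ⟨d, hd, hPd, hSd⟩ := key true
    obtain ⟨d', hd', hPd', hSd'⟩ := key false
    by_cases h1 : (p, true) ∈ d
    · by_cases h2 : (p, false) ∈ d'
      · have i1 := isClause_mono hd (isClause_insert hc hpc true)
        have i2 := isClause_mono hd' (isClause_insert hc hpc false)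
        refine ⟨res d d' p, ?_, hres d d' p i1 i2 h1 h2 hPd hPd', fun I hI =>
          clauseSat_res i1 i2 h1 h2 (hSd I hI) (hSd' I hI)⟩
        rintro ⟨q, b⟩ hq
        obtain ⟨h3 | h3, h4⟩ := (mem_res _ _ _ _ _).1 hq
        · have := hd h3
          simpa [h4] using this
        · have := hd' h3
          simpa [h4] using this
      · exact ⟨d', (Finset.subset_insert_iff_of_notMem h2).1 hd', hPd', hSd'⟩
    · exact ⟨d, (Finset.subset_insert_iff_of_notMem h1).1 hd, hPd, hSd⟩

theorem PI_inv (S : Finset (Clause α)) (hS : ∀ c ∈ S, IsClause c) (V Q H : Finset α)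
    (h : ∀ c ∈ S, QHInv V Q H c) : ∀ c ∈ PI S, QHInv V Q H c := by
  intro c hc
  have hc : IsPrimeImplicateT S c := by simpa [PI] using hc
  obtain ⟨d, hd, hP, hSd⟩ := completeness S hS (QHInv V Q H) h
    (fun c c' p a1 a2 a3 a4 a5 a6 => inv_res a1 a2 a3 a4 a5 a6) _ c rfl hc.1 hc.2.1
  rcases hd.eq_or_ssubset with e | e
  · exact e ▸ hP
  · exact absurd hSd (hc.2.2 d e)

theorem inv_horn (V : Finset α) (c : Clause α) :
    QHInv V ∅ Finset.univ c ↔ HornClause (renClause V c) := by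
  simp [QHInv, QHcond, HornClause]

theorem ren_empty (c : Clause α) : renClause ∅ c = c := by
  ext ⟨p, b⟩
  simp [mem_renClause]

/-- If a CNF theory `Σ` is Horn (resp. Horn renamable, q-Horn), then
the theory `PI(Σ)` of its prime implicates is Horn (resp. Horn renamable, q-Horn). -/
theorem prime_implicates_preserve_horn_variants
    (S : Finset (Clause α)) (hS : ∀ c ∈ S, IsClause c) :
    (IsHornTheory S → IsHornTheory (PI S)) ∧
    (IsRenHorn S → IsRenHorn (PI S)) ∧
    (IsQHorn S → IsQHorn (PI S)) := by
  refine ⟨fun h c hc => ?_, ?_, ?_⟩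
  · have := PI_inv S hS ∅ ∅ Finset.univ
      (fun c hc => (inv_horn ∅ c).2 (by rw [ren_empty]; exact h c hc)) c hc
    rwa [inv_horn, ren_empty] at this
  · rintro ⟨V, h⟩
    refine ⟨V, fun c hc => ?_⟩
    obtain ⟨d, hdm, rfl⟩ := Finset.mem_image.1 hc
    exact (inv_horn V d).1 (PI_inv S hS V ∅ Finset.univ
      (fun c hc => (inv_horn V c).2 (h _ (Finset.mem_image_of_mem _ hc))) d hdm)
  · rintro ⟨V, Q, H, hd, hu, h⟩
    have key := PI_inv S hS V Q H (fun c hc => by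
      have hm : renClause V c ∈ renTheory V S := Finset.mem_image_of_mem _ hc
      exact ⟨hu ▸ Finset.le_sup (f := varsC) hm, h _ hm⟩)
    refine ⟨V, Q ∩ varsT (renTheory V (PI S)), H ∩ varsT (renTheory V (PI S)), ?_, ?_, ?_⟩
    · apply Finset.eq_empty_of_forall_notMem
      intro q hq
      simp only [Finset.mem_inter] at hq
      have : q ∈ Q ∩ H := Finset.mem_inter.2 ⟨hq.1.1, hq.2.1⟩
      simp [hd] at this
    · rw [← Finset.union_inter_distrib_right]
      apply Finset.inter_eq_right.2
      apply Finset.sup_le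
      intro c hc
      obtain ⟨d, hdm, rfl⟩ := Finset.mem_image.1 hc
      exact (key d hdm).1
    · intro c hc
      have hsub : varsC c ⊆ varsT (renTheory V (PI S)) := Finset.le_sup (f := varsC) hc
      have hpos : posC c ⊆ varsT (renTheory V (PI S)) := by
        intro q hq
        exact hsub ((mem_varsC _ _).2 ⟨_, (mem_posC _ _).1 hq⟩)
      have e1 : ∀ X Y : Finset α, X ⊆ varsT (renTheory V (PI S)) →
          X ∩ (Y ∩ varsT (renTheory V (PI S))) = X ∩ Y := by
        intro X Y hX
        ext q
        simp only [Finset.mem_inter]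
        exact ⟨fun h => ⟨h.1, h.2.1⟩, fun h => ⟨h.1, h.2, hX h.1⟩⟩
      have hq : QHcond Q H c := by
        obtain ⟨d, hdm, rfl⟩ := Finset.mem_image.1 hc
        exact (key d hdm).2
      unfold QHcond
      rw [e1 _ _ hsub, e1 _ _ hpos]
      exact hq
end

section
/- Let ψ and φ be propositional formulas and V ⊆ 𝒜. If φ is irrelevant to V (IR(φ,V)), then Forget(ψ ∧ φ, V) ≡ Forget(ψ, V) ∧ φ. -/
variable {α : Type*} [Fintype α] [DecidableEq α]

theorem PropForm.sat_subst_tru (I : Set α) (p : α) (φ : PropForm α) :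
    PropForm.Sat I (PropForm.subst p PropForm.tru φ) ↔ PropForm.Sat (insert p I) φ := by
  induction φ with
  | var q =>
    by_cases hq : q = p <;> simp [PropForm.subst, PropForm.Sat, hq]
  | tru => simp [PropForm.subst, PropForm.Sat]
  | fls => simp [PropForm.subst, PropForm.Sat]
  | neg a iha => simp [PropForm.subst, PropForm.Sat, iha]
  | conj a b iha ihb => simp [PropForm.subst, PropForm.Sat, iha, ihb]
  | disj a b iha ihb => simp [PropForm.subst, PropForm.Sat, iha, ihb]

theorem PropForm.sat_subst_fls (I : Set α) (p : α) (φ : PropForm α) :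
    PropForm.Sat I (PropForm.subst p PropForm.fls φ) ↔ PropForm.Sat (I \ {p}) φ := by
  induction φ with
  | var q =>
    by_cases hq : q = p <;> simp [PropForm.subst, PropForm.Sat, hq]
  | tru => simp [PropForm.subst, PropForm.Sat]
  | fls => simp [PropForm.subst, PropForm.Sat]
  | neg a iha => simp [PropForm.subst, PropForm.Sat, iha]
  | conj a b iha ihb => simp [PropForm.subst, PropForm.Sat, iha, ihb]
  | disj a b iha ihb => simp [PropForm.subst, PropForm.Sat, iha, ihb]

theorem PropForm.sat_forget1 (I : Set α) (p : α) (φ : PropForm α) :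
    PropForm.Sat I (PropForm.forget1 φ p) ↔
      (PropForm.Sat (insert p I) φ ∨ PropForm.Sat (I \ {p}) φ) := by
  simp only [PropForm.forget1, PropForm.Sat, PropForm.sat_subst_tru, PropForm.sat_subst_fls]

/-- Satisfaction only depends on the atoms occurring in the formula. -/
theorem PropForm.sat_congr (I J : Set α) (φ : PropForm α)
    (h : ∀ q ∈ PropForm.vars φ, (q ∈ I ↔ q ∈ J)) : PropForm.Sat I φ ↔ PropForm.Sat J φ := by
  induction φ with
  | var q => exact h q (by simp [PropForm.vars])
  | tru => simp [PropForm.Sat]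
  | fls => simp [PropForm.Sat]
  | neg a iha => exact not_congr (iha h)
  | conj a b iha ihb =>
    exact and_congr (iha fun q hq => h q (Finset.mem_union_left _ hq))
      (ihb fun q hq => h q (Finset.mem_union_right _ hq))
  | disj a b iha ihb =>
    exact or_congr (iha fun q hq => h q (Finset.mem_union_left _ hq))
      (ihb fun q hq => h q (Finset.mem_union_right _ hq))

/-- Forgetting respects logical equivalence. -/
theorem PropForm.forget_congr (V : List α) : ∀ (a b : PropForm α), PropForm.equivalent a b →
    PropForm.equivalent (PropForm.Forget a V) (PropForm.Forget b V) := by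
  induction V with
  | nil => intro a b h; exact h
  | cons p V ih =>
    intro a b h
    refine ih _ _ fun I => ?_
    rw [PropForm.sat_forget1, PropForm.sat_forget1]
    exact or_congr (h _) (h _)

/-- If `IR(φ,V)`, then `Forget(ψ ∧ φ, V) ≡ Forget(ψ, V) ∧ φ`. -/
theorem forget_conj_irrelevant (ψ φ : PropForm α) (V : List α)
    (h : PropForm.IR φ V) :
    PropForm.equivalent (PropForm.Forget (PropForm.conj ψ φ) V)
      (PropForm.conj (PropForm.Forget ψ V) φ) := by
  induction V generalizing ψ with
  | nil => intro I; exact Iff.rfl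
  | cons p V ih =>
    obtain ⟨φ', he, hv⟩ := h
    have hp : p ∉ PropForm.vars φ' := hv p List.mem_cons_self
    have hih := ih (PropForm.forget1 ψ p) ⟨φ', he, fun q hq => hv q (List.mem_cons_of_mem _ hq)⟩
    have key : PropForm.equivalent (PropForm.forget1 (PropForm.conj ψ φ) p)
        (PropForm.conj (PropForm.forget1 ψ p) φ) := by
      intro I
      have h1 : PropForm.Sat (insert p I) φ ↔ PropForm.Sat I φ := by
        rw [he, he]
        refine PropForm.sat_congr _ _ _ fun q hq => ?_
        have hne : q ≠ p := fun e => hp (e ▸ hq)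
        simp [hne]
      have h2 : PropForm.Sat (I \ {p}) φ ↔ PropForm.Sat I φ := by
        rw [he, he]
        refine PropForm.sat_congr _ _ _ fun q hq => ?_
        have hne : q ≠ p := fun e => hp (e ▸ hq)
        simp [hne]
      simp only [PropForm.sat_forget1, PropForm.Sat, h1, h2]
      tauto
    intro I
    exact (PropForm.forget_congr V _ _ key I).trans (hih I)
end

section
/- Let φ and ψ be propositional formulas and V ⊆ 𝒜. Then φ ≡ Forget(ψ, V) if and only if Mod(φ) equals the extension Mod(ψ)↑V, i.e., Mod(φ) = {X ⊆ 𝒜 | there exists M ∈ Mod(ψ) with X \ V = M \ V}. -/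
variable {α : Type*} [Fintype α] [DecidableEq α]

theorem sat_subst_tru_aux (p : α) (φ : PropForm α) (I : Set α) :
    PropForm.Sat I (PropForm.subst p PropForm.tru φ) ↔ PropForm.Sat (insert p I) φ := by
  induction φ with
  | var q => by_cases h : q = p <;> simp [PropForm.subst, PropForm.Sat, h]
  | tru => simp [PropForm.subst, PropForm.Sat]
  | fls => simp [PropForm.subst, PropForm.Sat]
  | neg a ih => simp [PropForm.subst, PropForm.Sat, ih]
  | conj a b iha ihb => simp [PropForm.subst, PropForm.Sat, iha, ihb]
  | disj a b iha ihb => simp [PropForm.subst, PropForm.Sat, iha, ihb]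

theorem sat_subst_fls_aux (p : α) (φ : PropForm α) (I : Set α) :
    PropForm.Sat I (PropForm.subst p PropForm.fls φ) ↔ PropForm.Sat (I \ {p}) φ := by
  induction φ with
  | var q => by_cases h : q = p <;> simp [PropForm.subst, PropForm.Sat, h]
  | tru => simp [PropForm.subst, PropForm.Sat]
  | fls => simp [PropForm.subst, PropForm.Sat]
  | neg a ih => simp [PropForm.subst, PropForm.Sat, ih]
  | conj a b iha ihb => simp [PropForm.subst, PropForm.Sat, iha, ihb]
  | disj a b iha ihb => simp [PropForm.subst, PropForm.Sat, iha, ihb]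

theorem sat_forget_aux (V : List α) (ψ : PropForm α) (X : Set α) :
    PropForm.Sat X (PropForm.Forget ψ V) ↔
      ∃ M : Set α, PropForm.Sat M ψ ∧ X \ {a | a ∈ V} = M \ {a | a ∈ V} := by
  induction V generalizing ψ with
  | nil => simp [PropForm.Forget]
  | cons p V ih =>
    rw [PropForm.Forget, ih]
    simp only [PropForm.forget1, PropForm.Sat, sat_subst_tru_aux, sat_subst_fls_aux,
      Set.ext_iff, Set.mem_diff, Set.mem_setOf_eq, List.mem_cons]
    constructor
    · rintro ⟨M, h | h, hM⟩
      · refine ⟨_, h, fun x => ?_⟩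
        have := hM x
        simp only [Set.mem_insert_iff]
        tauto
      · refine ⟨_, h, fun x => ?_⟩
        have := hM x
        simp only [Set.mem_diff, Set.mem_singleton_iff]
        tauto
    · rintro ⟨M, h, hM⟩
      refine ⟨{x | (x ∈ X ∧ x ∉ V) ∨ (x ∈ M ∧ x ∈ V)}, ?_, fun x => ?_⟩
      · by_cases hp : p ∈ M
        · left
          convert h using 1
          ext x
          have := hM x
          simp only [Set.mem_insert_iff, Set.mem_setOf_eq]
          by_cases hx : x = p
          · subst hx; tauto
          · tauto
        · right
          convert h using 1
          ext x
          have := hM x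
          simp only [Set.mem_diff, Set.mem_singleton_iff, Set.mem_setOf_eq]
          by_cases hx : x = p
          · subst hx; tauto
          · tauto
      · simp only [Set.mem_setOf_eq]
        tauto

/-- `φ ≡ Forget(ψ, V)` iff `Mod(φ)` is the `V`-extension of `Mod(ψ)`,
i.e. `Mod(φ) = {X ⊆ 𝒜 | ∃ M ∈ Mod(ψ), X \ V = M \ V}`. -/
theorem equiv_forget_iff_models_eq_extension (φ ψ : PropForm α) (V : List α) :
    PropForm.equivalent φ (PropForm.Forget ψ V) ↔
      {X : Set α | PropForm.Sat X φ} =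
        {X : Set α | ∃ M : Set α, PropForm.Sat M ψ ∧
          X \ {a | a ∈ V} = M \ {a | a ∈ V}} := by
  simp only [PropForm.equivalent, sat_forget_aux, Set.ext_iff, Set.mem_setOf_eq]
end

section
/- Let Π and Σ be propositional theories and V a set of atoms. Then Σ ≡ Forget(Π, V) if and only if Σ is equivalent to the theory consisting of all formulas ψ such that Π ⊨ ψ and ψ is irrelevant to V (IR(ψ,V)). -/
variable {α : Type*} [Fintype α] [DecidableEq α]

namespace PropForm

theorem aux_sat_tru (I : Set α) (p : α) (φ : PropForm α) :
    Sat I (subst p tru φ) ↔ Sat (insert p I) φ := by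
  induction φ with
  | var q => by_cases h : q = p <;> simp [subst, Sat, h]
  | tru => simp [subst, Sat]
  | fls => simp [subst, Sat]
  | neg φ ih => simp [subst, Sat, ih]
  | conj φ ψ ih1 ih2 => simp [subst, Sat, ih1, ih2]
  | disj φ ψ ih1 ih2 => simp [subst, Sat, ih1, ih2]

theorem aux_sat_fls (I : Set α) (p : α) (φ : PropForm α) :
    Sat I (subst p fls φ) ↔ Sat (I \ {p}) φ := by
  induction φ with
  | var q => by_cases h : q = p <;> simp [subst, Sat, h]
  | tru => simp [subst, Sat]
  | fls => simp [subst, Sat]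
  | neg φ ih => simp [subst, Sat, ih]
  | conj φ ψ ih1 ih2 => simp [subst, Sat, ih1, ih2]
  | disj φ ψ ih1 ih2 => simp [subst, Sat, ih1, ih2]

theorem aux_sat_congr (I J : Set α) (φ : PropForm α)
    (h : ∀ q ∈ vars φ, (q ∈ I ↔ q ∈ J)) : Sat I φ ↔ Sat J φ := by
  induction φ with
  | var q => exact h q (by simp [vars])
  | tru => simp [Sat]
  | fls => simp [Sat]
  | neg φ ih => simp only [Sat]; rw [ih h]
  | conj φ ψ ih1 ih2 =>
    simp only [Sat]
    rw [ih1 fun q hq => h q (by simp [vars, hq]), ih2 fun q hq => h q (by simp [vars, hq])]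
  | disj φ ψ ih1 ih2 =>
    simp only [Sat]
    rw [ih1 fun q hq => h q (by simp [vars, hq]), ih2 fun q hq => h q (by simp [vars, hq])]

theorem aux_vars_subst (p q : α) (χ φ : PropForm α) (hχ : vars χ = ∅)
    (h : q ∈ vars (subst p χ φ)) : q ≠ p ∧ q ∈ vars φ := by
  induction φ with
  | var r =>
    by_cases hr : r = p
    · simp [subst, hr, hχ] at h
    · simp only [subst, hr, if_false, vars, Finset.mem_singleton] at h ⊢
      subst h
      exact ⟨hr, rfl⟩
  | tru => simp [subst, vars] at h
  | fls => simp [subst, vars] at h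
  | neg φ ih => exact ih h
  | conj φ ψ ih1 ih2 =>
    simp only [subst, vars, Finset.mem_union] at h ⊢
    tauto
  | disj φ ψ ih1 ih2 =>
    simp only [subst, vars, Finset.mem_union] at h ⊢
    tauto

theorem aux_vars_forget1 (p q : α) (φ : PropForm α)
    (h : q ∈ vars (forget1 φ p)) : q ≠ p ∧ q ∈ vars φ := by
  simp only [forget1, vars, Finset.mem_union] at h
  rcases h with h | h
  · exact aux_vars_subst p q tru φ rfl h
  · exact aux_vars_subst p q fls φ rfl h

theorem aux_vars_Forget (V : List α) (q : α) (φ : PropForm α)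
    (h : q ∈ vars (Forget φ V)) : q ∉ V ∧ q ∈ vars φ := by
  induction V generalizing φ with
  | nil => exact ⟨by simp, h⟩
  | cons p V ih =>
    obtain ⟨h1, h2⟩ := ih _ h
    obtain ⟨h3, h4⟩ := aux_vars_forget1 p q φ h2
    exact ⟨by simp [h1, h3], h4⟩

theorem aux_entails_forget1 (p : α) (φ : PropForm α) : entails φ (forget1 φ p) := by
  intro I hI
  simp only [forget1, Sat, aux_sat_tru, aux_sat_fls]
  by_cases hp : p ∈ I
  · left; rwa [Set.insert_eq_of_mem hp]
  · right; rwa [Set.diff_singleton_eq_self hp]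

theorem aux_entails_Forget (V : List α) (φ : PropForm α) : entails φ (Forget φ V) := by
  induction V generalizing φ with
  | nil => exact fun I h => h
  | cons p V ih => exact fun I h => ih _ I (aux_entails_forget1 p φ I h)

theorem aux_forget1_entails (p : α) (φ ψ : PropForm α) (h : entails φ ψ) (hp : p ∉ vars ψ) :
    entails (forget1 φ p) ψ := by
  intro I hI
  simp only [forget1, Sat, aux_sat_tru, aux_sat_fls] at hI
  rcases hI with hI | hI
  · refine (aux_sat_congr _ _ ψ fun q hq => ?_).1 (h _ hI)
    have : q ≠ p := fun e => hp (e ▸ hq)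
    simp [this]
  · refine (aux_sat_congr _ _ ψ fun q hq => ?_).1 (h _ hI)
    have : q ≠ p := fun e => hp (e ▸ hq)
    simp [this]

theorem aux_Forget_entails (V : List α) (φ ψ : PropForm α) (h : entails φ ψ)
    (hp : ∀ p ∈ V, p ∉ vars ψ) : entails (Forget φ V) ψ := by
  induction V generalizing φ with
  | nil => exact h
  | cons p V ih =>
    exact ih _ (aux_forget1_entails p φ ψ h (hp p (by simp))) fun q hq => hp q (by simp [hq])

theorem aux_main (V : List α) (φ : PropForm α) (I : Set α) :
    Sat I (Forget φ V) ↔ ∀ ψ : PropForm α, entails φ ψ → IR ψ V → Sat I ψ := by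
  constructor
  · rintro hI ψ h ⟨χ, he, hv⟩
    exact (he I).2 (aux_Forget_entails V φ χ (fun J hJ => (he J).1 (h J hJ)) hv I hI)
  · intro h
    exact h _ (aux_entails_Forget V φ)
      ⟨_, fun _ => Iff.rfl, fun p hp hq => (aux_vars_Forget V p φ hq).1 hp⟩

end PropForm

/-- `Σ ≡ Forget(Π, V)` iff `Σ` is equivalent to the theory of all
formulas `ψ` such that `Π ⊨ ψ` and `IR(ψ,V)`. -/
theorem equiv_forget_iff_irrelevant_consequences (P S : PropForm α) (V : List α) :
    PropForm.equivalent S (PropForm.Forget P V) ↔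
      ∀ I : Set α, PropForm.Sat I S ↔
        ∀ ψ : PropForm α, PropForm.entails P ψ → PropForm.IR ψ V → PropForm.Sat I ψ := by
  simp only [PropForm.equivalent, PropForm.aux_main]
end
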